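/- arXiv:0904.2792 — 4 statements merged into one kernel-verified Lean document; each statement's English description precedes it below -/
import Mathlib

section
/- For all n ≥ 2 and 2 ≤ k ≤ n, the recurrence a_{n,k} = a_{n,k-1} + a_{n-1,k-1} holds. -/
open Classical

noncomputable section

/-- `π` has at least one fixed point. -/
def hasFP {n : ℕ} (π : Equiv.Perm (Fin n)) : Prop := ∃ i, π i = i

/-- The set of (1-based) values of the fixed points of `π`, viewing a permutation of
`Fin n` as a permutation of `[n] = {1, …, n}` via `i ↦ i + 1`. -/
def fixVals {n : ℕ} (π : Equiv.Perm (Fin n)) : Set ℕ :=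
  {k | ∃ i : Fin n, π i = i ∧ (i : ℕ) + 1 = k}

/-- The largest fixed point `ℓ(π)` (in 1-based indexing). -/
def lfp {n : ℕ} (π : Equiv.Perm (Fin n)) : ℕ := sSup (fixVals π)

/-- The smallest fixed point `s(π)` (in 1-based indexing). -/
def sfp {n : ℕ} (π : Equiv.Perm (Fin n)) : ℕ := sInf (fixVals π)

/-- `d n` is the number of derangements of `[n]`. -/
def d (n : ℕ) : ℕ := Set.ncard {π : Equiv.Perm (Fin n) | ∀ i, π i ≠ i}

/-- `a n k` is the number of permutations of `[n]` with at least one fixed point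
whose largest fixed point equals `k`. -/
def a (n k : ℕ) : ℕ := Set.ncard {π : Equiv.Perm (Fin n) | hasFP π ∧ lfp π = k}

/-- `b n k` is the number of permutations of `[n]` with at least one fixed point
whose smallest fixed point equals `k`. -/
def b (n k : ℕ) : ℕ := Set.ncard {π : Equiv.Perm (Fin n) | hasFP π ∧ sfp π = k}

/-- `alpha n` is the sum of the largest fixed points over all non-derangements of `[n]`. -/
def alpha (n : ℕ) : ℕ :=
  ∑ π ∈ Finset.univ.filter (fun π : Equiv.Perm (Fin n) => hasFP π), lfp π

/-- `beta n` is the sum of the smallest fixed points over all non-derangements of `[n]`. -/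
def beta (n : ℕ) : ℕ :=
  ∑ π ∈ Finset.univ.filter (fun π : Equiv.Perm (Fin n) => hasFP π), sfp π

/-!
Write `D s` for the set of permutations having no fixed point in `s`. A permutation of `[n]` with
largest fixed point `k` is a permutation that fixes `k` and lies in `D {k + 1, …, n}`. Deleting the
point `k` and closing the gap turns it into a permutation of `[n - 1]` in `D {k, …, n - 1}`, so
`a n k = |D {k, …, n - 1}|` and likewise `a n (k - 1) = |D {k - 1, …, n - 1}|`. A permutation of
`[n - 1]` in the first set either belongs to the second one or has `k - 1` as its largest fixed
point, and the latter case accounts for `a (n - 1) (k - 1)`.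
-/

open Equiv (Perm)

/-- The permutations of `α` without a fixed point in `s`; for `s = Set.univ` these are the
derangements of `α`. Restricting the condition to `s` lets the permutations whose largest fixed
point is given be counted by deletion of that point. -/
def derangedOn {α : Type*} (s : Set α) : Set (Perm α) := {σ | ∀ x ∈ s, σ x ≠ x}

section DerangedOn

variable {α β : Type*}

theorem ncard_derangedOn_eq_add_ncard_insert [Finite α] (x : α) (s : Set α) :
    (derangedOn s).ncard =
      (derangedOn (insert x s)).ncard + ({σ : Perm α | σ x = x} ∩ derangedOn s).ncard := by
  have insert_eq_diff : derangedOn (insert x s) = derangedOn s \ {σ : Perm α | σ x = x} := by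
    ext σ
    simp only [derangedOn, Set.forall_mem_insert, Set.mem_sdiff, Set.mem_ofPred_eq, and_comm, ne_eq]
  rw [insert_eq_diff, Set.inter_comm, add_comm,
    Set.ncard_inter_add_ncard_sdiff_eq_ncard _ _ (Set.toFinite _)]

variable {s : Set α} {q : α → Prop} (e : β ≃ Subtype q)

theorem range_extendDomainHom [DecidablePred q] :
    Set.range (Perm.extendDomainHom e) = {π | ∀ x, ¬ q x → π x = x} := by
  ext π
  constructor
  · rintro ⟨σ, rfl⟩ x hx
    exact σ.extendDomain_apply_not_subtype e hx
  · intro hπ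
    obtain ⟨τ, hτ⟩ := (Perm.subtypeEquivSubtypePerm q).surjective ⟨π, hπ⟩
    refine ⟨e.symm.permCongr τ, ?_⟩
    have extend_eq : (e.symm.permCongr τ).extendDomain e = Perm.ofSubtype τ := by
      rw [Perm.extendDomain, ← Equiv.permCongr_symm, Equiv.apply_symm_apply]
      rfl
    exact extend_eq.trans (congrArg Subtype.val hτ)

theorem extendDomain_mem_derangedOn_iff [DecidablePred q] (hs : s ⊆ {x | q x}) {σ : Perm β} :
    σ.extendDomain e ∈ derangedOn s ↔ σ ∈ derangedOn ((fun y => (e y : α)) ⁻¹' s) := by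
  constructor
  · intro h y hy hfix
    exact h (e y) hy (by rw [Perm.extendDomain_apply_image, hfix])
  · intro h x hx hfix
    obtain ⟨y, hy⟩ := e.surjective ⟨x, hs hx⟩
    obtain rfl : (e y : α) = x := congrArg Subtype.val hy
    rw [Perm.extendDomain_apply_image] at hfix
    exact h y hx (e.injective (Subtype.ext hfix))

theorem ncard_fixing_compl_inter_derangedOn (hs : s ⊆ {x | q x}) :
    ({π : Perm α | ∀ x, ¬ q x → π x = x} ∩ derangedOn s).ncard =
      (derangedOn ((fun y => (e y : α)) ⁻¹' s)).ncard := by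
  classical
  rw [← range_extendDomainHom e, ← Set.image_preimage_eq_range_inter,
    Set.ncard_image_of_injective _ (Perm.extendDomainHom_injective e)]
  exact congrArg Set.ncard (Set.ext fun _ => extendDomain_mem_derangedOn_iff e hs)

end DerangedOn

theorem ncard_fixing_inter_derangedOn {m : ℕ} (p : Fin (m + 1)) {s : Set (Fin (m + 1))}
    (hp : p ∉ s) :
    ({π : Perm (Fin (m + 1)) | π p = p} ∩ derangedOn s).ncard =
      (derangedOn (p.succAbove ⁻¹' s)).ncard := by
  simpa only [not_not, forall_eq, finSuccAboveEquiv_apply] using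
    ncard_fixing_compl_inter_derangedOn (finSuccAboveEquiv p) (s := s)
      fun _ hx => ne_of_mem_of_not_mem hx hp

section LargestFixedPoint

variable {n m : ℕ}

theorem hasFP_and_lfp_eq_iff_isGreatest {π : Perm (Fin n)} {k : ℕ} :
    hasFP π ∧ lfp π = k ↔ IsGreatest (fixVals π) k := by
  constructor
  · rintro ⟨⟨i, hi⟩, rfl⟩
    have bddAbove : BddAbove (fixVals π) := ⟨n, by rintro _ ⟨j, -, rfl⟩; exact j.isLt⟩
    exact ⟨Nat.sSup_mem ⟨i + 1, i, hi, rfl⟩ bddAbove, fun _ => le_csSup bddAbove⟩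
  · intro h
    obtain ⟨i, hi, -⟩ := h.1
    exact ⟨⟨i, hi⟩, h.csSup_eq⟩

theorem isGreatest_fixVals_val_add_one_iff {π : Perm (Fin n)} {p : Fin n} :
    IsGreatest (fixVals π) (p + 1) ↔ π p = p ∧ π ∈ derangedOn (Set.Ioi p) := by
  constructor
  · rintro ⟨⟨i, hi, hip⟩, hub⟩
    obtain rfl : i = p := Fin.ext (Nat.succ_injective hip)
    exact ⟨hi, fun j hj hfix => (Nat.succ_le_succ_iff.1 (hub ⟨j, hfix, rfl⟩)).not_gt hj⟩
  · rintro ⟨hp, h⟩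
    refine ⟨⟨p, hp, rfl⟩, ?_⟩
    rintro _ ⟨j, hj, rfl⟩
    exact Nat.succ_le_succ (not_lt.1 fun hlt : p < j => h j hlt hj)

theorem a_val_add_one_eq_ncard (p : Fin n) :
    a n (p + 1) = ({π : Perm (Fin n) | π p = p} ∩ derangedOn (Set.Ioi p)).ncard :=
  congrArg Set.ncard <| Set.ext fun _ =>
    hasFP_and_lfp_eq_iff_isGreatest.trans isGreatest_fixVals_val_add_one_iff

theorem a_val_add_one_eq_ncard_derangedOn (p : Fin (m + 1)) :
    a (m + 1) (p + 1) = (derangedOn {i : Fin m | p ≤ i.castSucc}).ncard := by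
  rw [a_val_add_one_eq_ncard, ncard_fixing_inter_derangedOn p Set.self_notMem_Ioi]
  simp only [Set.preimage, Set.mem_Ioi, Fin.lt_succAbove_iff_le_castSucc]

theorem a_val_add_one_eq_ncard_derangedOn_Ici (p : Fin m) :
    a (m + 1) (p + 1) = (derangedOn (Set.Ici p)).ncard :=
  a_val_add_one_eq_ncard_derangedOn p.castSucc

theorem a_val_add_two_eq_ncard_derangedOn_Ioi (p : Fin m) :
    a (m + 1) (p + 2) = (derangedOn (Set.Ioi p)).ncard := by
  have count_succ := a_val_add_one_eq_ncard_derangedOn p.succ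
  simp only [Fin.succ_le_castSucc_iff] at count_succ
  exact count_succ

theorem ncard_derangedOn_Ioi (p : Fin m) :
    (derangedOn (Set.Ioi p)).ncard = (derangedOn (Set.Ici p)).ncard + a m (p + 1) := by
  rw [ncard_derangedOn_eq_add_ncard_insert p, Set.Ioi_insert, a_val_add_one_eq_ncard]

end LargestFixedPoint

theorem stmt4 (n k : ℕ) (hn : 2 ≤ n) (hk1 : 2 ≤ k) (hkn : k ≤ n) :
    a n k = a n (k - 1) + a (n - 1) (k - 1) := by
  obtain ⟨m, rfl⟩ : ∃ m, n = m + 1 := ⟨n - 1, by lia⟩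
  obtain ⟨j, rfl⟩ : ∃ j, k = j + 2 := ⟨k - 2, by lia⟩
  let p : Fin m := ⟨j, by lia⟩
  calc
    a (m + 1) (j + 2) = (derangedOn (Set.Ioi p)).ncard := a_val_add_two_eq_ncard_derangedOn_Ioi p
    _ = (derangedOn (Set.Ici p)).ncard + a m (j + 1) := ncard_derangedOn_Ioi p
    _ = a (m + 1) (j + 1) + a m (j + 1) := by rw [← a_val_add_one_eq_ncard_derangedOn_Ici p]
end
end

section
/- For all n ≥ 1, the sum of the values of the smallest fixed points over all permutations of [n] that have at least one fixed point equals the number of permutations of [n+1] having at least two fixed points. That is, β_n = |E_{n+1}|. -/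
open Classical

noncomputable section

/-!
`s(π)` is the number of positions `p ∈ [n + 1]` with `p ≤ s(π)` (that is, `p < s(π)` when `p`
is an element of `Fin (n + 1)`), so `β_n` counts the pairs `(π, p)` with such a `p`. Inserting a new
fixed point at position `p` turns such a pair into a permutation of `[n + 1]` whose smallest
fixed point is `p` and whose remaining fixed points come from those of `π`. The pair is recovered by
deleting the smallest fixed point.
-/

section

open Equiv Function

theorem nontrivial_fixedPoints_iff {α : Type*} {g : α → α} :
    (fixedPoints g).Nontrivial ↔ ∃ i j, i ≠ j ∧ g i = i ∧ g j = j := by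
  simp only [Set.Nontrivial, mem_fixedPoints_iff]
  tauto

section ExtendDomain

variable {α β : Type*} {q : β → Prop} [DecidablePred q] (f : α ≃ Subtype q)

theorem fixedPoints_extendDomain (π : Perm α) :
    fixedPoints (π.extendDomain f) = {x | ¬q x} ∪ (fun x ↦ (f x : β)) '' fixedPoints π := by
  ext x
  by_cases hx : q x
  · obtain ⟨y, rfl⟩ : ∃ y, (f y : β) = x := ⟨f.symm ⟨x, hx⟩, by rw [apply_symm_apply]⟩
    simp [IsFixedPt, hx, Subtype.val_inj]
  · simp [IsFixedPt, Perm.extendDomain_apply_not_subtype _ f hx, hx]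

theorem exists_extendDomain_eq {σ : Perm β} (hσ : ∀ x, ¬q x → σ x = x) :
    ∃ π : Perm α, π.extendDomain f = σ := by
  obtain ⟨τ, hτ⟩ := (Perm.subtypeEquivSubtypePerm q).surjective ⟨σ, hσ⟩
  refine ⟨f.symm.permCongr τ, ?_⟩
  calc (f.symm.permCongr τ).extendDomain f = Perm.ofSubtype τ := by
        ext x
        by_cases hx : q x
        · simp [Perm.extendDomain_apply_subtype _ f hx, Perm.ofSubtype_apply_of_mem τ hx]
        · simp [Perm.extendDomain_apply_not_subtype _ f hx, Perm.ofSubtype_apply_of_not_mem τ hx]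
    _ = σ := congrArg Subtype.val hτ

end ExtendDomain

section SmallestFixedPoint

variable {n : ℕ} {π : Perm (Fin n)}

theorem lt_sfp_iff (hπ : hasFP π) {k : ℕ} : k < sfp π ↔ ∀ i ∈ fixedPoints π, k ≤ i := by
  have fixVals_nonempty : (fixVals π).Nonempty :=
    let ⟨i, hi⟩ := hπ
    ⟨i + 1, i, hi, rfl⟩
  rw [sfp, ← Nat.succ_le_iff, le_csInf_iff (OrderBot.bddBelow _) fixVals_nonempty]
  simp [fixVals, IsFixedPt]

theorem sfp_le (hπ : hasFP π) : sfp π ≤ n := by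
  obtain ⟨i, hi⟩ := hπ
  exact le_trans (Nat.sInf_le (m := i + 1) ⟨i, hi, rfl⟩) i.is_lt

theorem beta_eq_ncard_lt_sfp (n : ℕ) :
    beta n = {x : Perm (Fin n) × Fin (n + 1) | hasFP x.1 ∧ x.2 < sfp x.1}.ncard := by
  have card_lt_sfp {π : Perm (Fin n)} (hπ : hasFP π) :
      sfp π = Finset.card {p : Fin (n + 1) | p < sfp π} := by
    rw [Fin.card_filter_val_lt, min_eq_right ((sfp_le hπ).trans n.le_succ)]
  calc beta n = ∑ π : Perm (Fin n) with hasFP π, Finset.card {p : Fin (n + 1) | p < sfp π} :=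
        Finset.sum_congr rfl fun π hπ ↦ card_lt_sfp (Finset.mem_filter.1 hπ).2
    _ = Finset.card {x : Perm (Fin n) × Fin (n + 1) | hasFP x.1 ∧ x.2 < sfp x.1} := by
        simp only [Finset.card_filter, Finset.sum_filter, Fintype.sum_prod_type, ite_and,
          Finset.sum_ite_irrel, Finset.sum_const_zero]
    _ = _ := by rw [← Set.ncard_coe_finset, Finset.coe_filter_univ]

end SmallestFixedPoint

section InsertFixedPoint

variable {n : ℕ} (p : Fin (n + 1)) (π : Perm (Fin n))

/-- The permutation of `Fin (n + 1)` that fixes `p` and acts as `π` on the other points, which are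
identified with `Fin n` through `p.succAbove`. -/
def insertFixedPoint : Perm (Fin (n + 1)) :=
  π.extendDomain (finSuccAboveEquiv p)

theorem insertFixedPoint_injective : Injective (insertFixedPoint p) :=
  Perm.extendDomainHom_injective (finSuccAboveEquiv p)

theorem exists_insertFixedPoint_eq {p : Fin (n + 1)} {σ : Perm (Fin (n + 1))} (hσ : σ p = p) :
    ∃ π, insertFixedPoint p π = σ :=
  exists_extendDomain_eq (finSuccAboveEquiv p) fun x hx ↦ by rwa [not_not.1 hx]

theorem fixedPoints_insertFixedPoint :
    fixedPoints (insertFixedPoint p π) = insert p (p.succAbove '' fixedPoints π) := by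
  simp [insertFixedPoint, fixedPoints_extendDomain, finSuccAboveEquiv_apply]

theorem nontrivial_fixedPoints_insertFixedPoint_iff :
    (fixedPoints (insertFixedPoint p π)).Nontrivial ↔ hasFP π := by
  rw [fixedPoints_insertFixedPoint, Set.nontrivial_iff_exists_ne (Set.mem_insert p _)]
  simp [Fin.succAbove_ne, IsFixedPt, hasFP]

theorem isLeast_fixedPoints_insertFixedPoint_iff :
    IsLeast (fixedPoints (insertFixedPoint p π)) p ↔ ∀ i ∈ fixedPoints π, p ≤ i.castSucc := by
  have le_succAbove_iff (i : Fin n) : p ≤ p.succAbove i ↔ p ≤ i.castSucc :=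
    (Fin.succAbove_ne p i).symm.le_iff_lt.trans (Fin.lt_succAbove_iff_le_castSucc p i)
  simp [fixedPoints_insertFixedPoint, IsLeast, mem_lowerBounds, le_succAbove_iff]

variable {π}

theorem lt_sfp_iff_isLeast_fixedPoints_insertFixedPoint (hπ : hasFP π) :
    p < sfp π ↔ IsLeast (fixedPoints (insertFixedPoint p π)) p := by
  simp [lt_sfp_iff hπ, isLeast_fixedPoints_insertFixedPoint_iff, Fin.le_def]

theorem bijOn_insertFixedPoint :
    Set.BijOn (fun x : Perm (Fin n) × Fin (n + 1) ↦ insertFixedPoint x.2 x.1)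
      {x | hasFP x.1 ∧ x.2 < sfp x.1} {σ | (fixedPoints σ).Nontrivial} := by
  refine ⟨?_, ?_, ?_⟩
  · rintro ⟨π, p⟩ ⟨hπ, -⟩
    exact (nontrivial_fixedPoints_insertFixedPoint_iff p π).2 hπ
  · rintro ⟨π, p⟩ ⟨hπ, hp⟩ ⟨τ, q⟩ ⟨hτ, hq⟩ (h : insertFixedPoint p π = insertFixedPoint q τ)
    rw [lt_sfp_iff_isLeast_fixedPoints_insertFixedPoint _ hπ] at hp
    rw [lt_sfp_iff_isLeast_fixedPoints_insertFixedPoint _ hτ, ← h] at hq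
    obtain rfl : p = q := hp.unique hq
    rw [insertFixedPoint_injective p h]
  · intro σ (hσ : (fixedPoints σ).Nontrivial)
    obtain ⟨p, hp⟩ : ∃ p, IsLeast (fixedPoints σ) p := ⟨_, isLeast_csInf hσ.nonempty⟩
    obtain ⟨π, rfl⟩ := exists_insertFixedPoint_eq hp.1
    have hπ : hasFP π := (nontrivial_fixedPoints_insertFixedPoint_iff p π).1 hσ
    exact ⟨(π, p), ⟨hπ, (lt_sfp_iff_isLeast_fixedPoints_insertFixedPoint p hπ).2 hp⟩, rfl⟩

end InsertFixedPoint

end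

theorem stmt9 (n : ℕ) (hn : 1 ≤ n) :
    beta n = Set.ncard {π : Equiv.Perm (Fin (n + 1)) | ∃ i j, i ≠ j ∧ π i = i ∧ π j = j} := by
  rw [beta_eq_ncard_lt_sfp, bijOn_insertFixedPoint.ncard_eq]
  simp only [nontrivial_fixedPoints_iff]
end
end

section
/- For all n ≥ 2, β_n = (n+1)·β_{n-1} + n·(-1)^{n+1}. (Here the identity is between integers, with β_n regarded as an integer.) -/
open Classical

noncomputable section

/-!
Inserting a new fixed point at position `k` identifies the permutations of `[n]` all of whose
fixed points are at least `k` with the permutations of `[n + 1]` whose smallest fixed point is `k`.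
Summing over `k ∈ [n + 1]`, the latter give all non-derangements of `[n + 1]`; among the former, a
non-derangement `π` of `[n]` occurs for `s(π)` values of `k` and a derangement for all `n + 1`.
Hence `(n + 1)! - d_{n+1} = β_n + (n + 1) d_n`, and the recurrence for `β` follows from
`d_{n+1} = (n + 1) d_n - (-1) ^ n`.
-/

open Equiv Finset Function

section ExtendDomain

variable {α β : Type*} {p : α → Prop} [DecidablePred p]

theorem fixedPoints_extendDomain_s13 (σ : Perm β) (e : β ≃ Subtype p) :
    fixedPoints (σ.extendDomain e) = {a | ¬p a} ∪ (fun b ↦ (e b : α)) '' fixedPoints σ := by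
  ext a
  by_cases ha : p a
  · obtain ⟨b, hb⟩ := e.surjective ⟨a, ha⟩
    obtain rfl : (e b : α) = a := congrArg Subtype.val hb
    simp [IsFixedPt, Perm.extendDomain_apply_image, ha, Subtype.val_inj]
  · simp [IsFixedPt, Perm.extendDomain_apply_not_subtype, ha]

theorem exists_extendDomain_eq_s13 (e : β ≃ Subtype p) {π : Perm α} (hπ : ∀ a, ¬p a → π a = a) :
    ∃ σ : Perm β, σ.extendDomain e = π := by
  obtain ⟨τ, hτ⟩ := (Perm.subtypeEquivSubtypePerm p).surjective ⟨π, hπ⟩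
  refine ⟨e.symm.permCongr τ, ?_⟩
  calc (e.symm.permCongr τ).extendDomain e = Perm.ofSubtype τ := by
        ext a
        by_cases ha : p a
        · simp [Perm.extendDomain_apply_subtype, Perm.ofSubtype_apply_of_mem, ha]
        · simp [Perm.extendDomain_apply_not_subtype, Perm.ofSubtype_apply_of_not_mem, ha]
    _ = π := congrArg Subtype.val hτ

end ExtendDomain

section LeastFixedPoint

theorem isLeast_fixedPoints_extendDomain_iff {α β : Type*} [Preorder α] {a : α}
    [DecidablePred (· ≠ a)] (σ : Perm β) (e : β ≃ {x // x ≠ a}) :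
    IsLeast (fixedPoints (σ.extendDomain e)) a ↔ ∀ b ∈ fixedPoints σ, a ≤ e b := by
  simp [fixedPoints_extendDomain_s13, IsLeast, mem_lowerBounds]

theorem card_filter_isLeast_fixedPoints {α β : Type*} [Preorder α] [Fintype α] [DecidableEq α]
    [Fintype β] [DecidableEq β] {a : α} (e : β ≃ {x // x ≠ a}) :
    #{π : Perm α | IsLeast (fixedPoints π) a} =
      #{σ : Perm β | ∀ b ∈ fixedPoints σ, a ≤ e b} := by
  rw [← card_image_of_injective _ (Perm.extendDomainHom_injective e)]
  congr 1
  ext π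
  simp only [mem_filter_univ, mem_image, Perm.extendDomainHom_apply]
  constructor
  · intro hπ
    obtain ⟨σ, rfl⟩ := exists_extendDomain_eq_s13 e (π := π) fun x hx ↦ by
      rw [not_not.1 hx]
      exact hπ.1
    exact ⟨σ, (isLeast_fixedPoints_extendDomain_iff σ e).1 hπ, rfl⟩
  · rintro ⟨σ, hσ, rfl⟩
    exact (isLeast_fixedPoints_extendDomain_iff σ e).2 hσ

theorem card_filter_isLeast_fixedPoints_fin {n : ℕ} (k : Fin (n + 1)) :
    #{π : Perm (Fin (n + 1)) | IsLeast (fixedPoints π) k} =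
      #{σ : Perm (Fin n) | ∀ i ∈ fixedPoints σ, k ≤ i.castSucc} := by
  have le_succAbove_iff (i : Fin n) : k ≤ k.succAbove i ↔ k ≤ i.castSucc := by
    rw [(k.succAbove_ne i).symm.le_iff_lt, Fin.lt_succAbove_iff_le_castSucc]
  simp only [card_filter_isLeast_fixedPoints (finSuccAboveEquiv k), finSuccAboveEquiv_apply,
    le_succAbove_iff]

theorem exists_isLeast_fixedPoints_iff {α : Type*} [LinearOrder α] [WellFoundedLT α]
    (f : α → α) : (∃ a, IsLeast (fixedPoints f) a) ↔ ∃ a, f a = a := by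
  refine ⟨fun ⟨a, ha⟩ ↦ ⟨a, ha.1⟩, fun hf ↦ ?_⟩
  obtain ⟨a, ha⟩ := exists_minimal_of_wellFoundedLT (· ∈ fixedPoints f) hf
  exact ⟨a, minimal_iff_isLeast.1 ha⟩

theorem card_filter_forall_ne (α : Type*) [Fintype α] [DecidableEq α]
    [DecidablePred fun π : Perm α ↦ ∀ a, π a ≠ a] :
    #{π : Perm α | ∀ a, π a ≠ a} = numDerangements (Fintype.card α) := by
  rw [← card_derangements_eq_numDerangements, Fintype.card_subtype]
  congr

theorem sum_card_filter_isLeast_fixedPoints (α : Type*) [Fintype α] [LinearOrder α] :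
    ∑ a : α, #{π : Perm α | IsLeast (fixedPoints π) a} + numDerangements (Fintype.card α) =
      (Fintype.card α).factorial := by
  have disjoint_fibers : Set.PairwiseDisjoint (univ : Finset α)
      fun a ↦ ({π : Perm α | IsLeast (fixedPoints π) a} : Finset (Perm α)) :=
    fun a _ b _ hab ↦ disjoint_filter.2 fun _ _ ha hb ↦ hab (ha.unique hb)
  calc
    _ = #{π : Perm α | ∃ a, π a = a} + #{π : Perm α | ¬∃ a, π a = a} := by
        congr 1
        · rw [← card_biUnion disjoint_fibers]
          congr 1
          ext π
          simp [← exists_isLeast_fixedPoints_iff]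
        · simp only [not_exists, ← ne_eq, card_filter_forall_ne]
    _ = _ := by
        rw [card_filter_add_card_filter_not, card_univ, Fintype.card_perm]

end LeastFixedPoint

theorem sfp_eq_of_isLeast {n : ℕ} {π : Perm (Fin n)} {i : Fin n}
    (hi : IsLeast (fixedPoints π) i) : sfp π = i + 1 := by
  have isLeast_fixVals : IsLeast (fixVals π) (i + 1) := by
    refine ⟨⟨i, hi.1, rfl⟩, ?_⟩
    rintro _ ⟨j, hj, rfl⟩
    exact Nat.succ_le_succ (hi.2 hj)
  exact isLeast_fixVals.csInf_eq

theorem card_filter_forall_fixedPoints_le {n : ℕ} (π : Perm (Fin n)) :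
    #{k : Fin (n + 1) | ∀ i ∈ fixedPoints π, k ≤ i.castSucc} =
      if hasFP π then sfp π else n + 1 := by
  split_ifs with h
  · obtain ⟨i, hi⟩ := (exists_isLeast_fixedPoints_iff π).2 h
    have le_iff (k : Fin (n + 1)) :
        (∀ j ∈ fixedPoints π, k ≤ j.castSucc) ↔ k ≤ i.castSucc :=
      ⟨fun hk ↦ hk i hi.1, fun hk j hj ↦ hk.trans (Fin.castSucc_le_castSucc_iff.2 (hi.2 hj))⟩
    simp only [le_iff, filter_ge_eq_Iic, Fin.card_Iic, Fin.val_castSucc, sfp_eq_of_isLeast hi]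
  · rw [filter_true_of_mem fun k _ i hi ↦ absurd ⟨i, hi⟩ h, card_univ, Fintype.card_fin]

theorem sum_card_filter_forall_fixedPoints_le (n : ℕ) :
    ∑ k : Fin (n + 1), #{π : Perm (Fin n) | ∀ i ∈ fixedPoints π, k ≤ i.castSucc} =
      beta n + (n + 1) * numDerangements n := by
  calc
    _ = ∑ π : Perm (Fin n), #{k : Fin (n + 1) | ∀ i ∈ fixedPoints π, k ≤ i.castSucc} :=
        sum_card_bipartiteAbove_eq_sum_card_bipartiteBelow _
    _ = beta n + #{π : Perm (Fin n) | ¬hasFP π} * (n + 1) := by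
        simp only [card_filter_forall_fixedPoints_le, sum_ite, sum_const, smul_eq_mul, beta]
    _ = _ := by
        simp only [hasFP, not_exists, ← ne_eq, card_filter_forall_ne, Fintype.card_fin, mul_comm]

theorem beta_add_numDerangements_eq_factorial (n : ℕ) :
    beta n + (n + 1) * numDerangements n + numDerangements (n + 1) = (n + 1).factorial := by
  have total := sum_card_filter_isLeast_fixedPoints (Fin (n + 1))
  simpa only [card_filter_isLeast_fixedPoints_fin, sum_card_filter_forall_fixedPoints_le,
    Fintype.card_fin] using total

theorem stmt13 (n : ℕ) (hn : 2 ≤ n) :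
    (beta n : ℤ) = (n + 1) * beta (n - 1) + n * (-1) ^ (n + 1) := by
  obtain ⟨m, rfl⟩ : ∃ m, n = m + 1 := ⟨n - 1, by omega⟩
  have beta_m : (beta m + (m + 1) * numDerangements m + numDerangements (m + 1) : ℤ) =
      (m + 1).factorial := mod_cast beta_add_numDerangements_eq_factorial m
  have beta_succ :
      (beta (m + 1) + (m + 2) * numDerangements (m + 1) + numDerangements (m + 2) : ℤ) =
        (m + 2) * (m + 1).factorial := mod_cast beta_add_numDerangements_eq_factorial (m + 1)
  have der_succ := numDerangements_succ m
  have der_add_two := numDerangements_succ (m + 1)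
  rw [Nat.add_sub_cancel]
  push_cast at der_add_two ⊢
  linear_combination beta_succ - (m + 2) * beta_m - der_add_two - (m + 2) * der_succ
end
end

section
/- The limit as n → ∞ of E[X_n]/n equals 1/(e-1), where E[X_n] = d_{n+1}/(n! - d_n) is the expected value of the largest fixed point of a uniformly random permutation of [n] conditioned on having at least one fixed point. Equivalently, lim_{n→∞} d_{n+1} / (n·(n! - d_n)) = 1/(e-1). -/
open Classical

noncomputable section

open Filter Topology

theorem d_eq_numDerangements (n : ℕ) : d n = numDerangements n :=
  (Nat.card_eq_fintype_card (α := derangements (Fin n))).trans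
    card_derangements_fin_eq_numDerangements

theorem exp_neg_div_one_sub_exp_neg (x : ℝ) :
    Real.exp (-x) / (1 - Real.exp (-x)) = 1 / (Real.exp x - 1) := by
  have hx : Real.exp x ≠ 0 := Real.exp_ne_zero x
  rw [Real.exp_neg, ← mul_div_mul_left _ _ hx, mul_sub, mul_inv_cancel₀ hx, mul_one]

section RatioLimit

variable {𝕜 : Type*} [Field 𝕜] [CharZero 𝕜]

-- At `n = 0`, and whenever `u n = n!`, both sides are `0` because `x / 0 = 0`.
theorem succ_div_mul_factorial_sub (u : ℕ → 𝕜) (n : ℕ) :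
    u (n + 1) / (n * (n.factorial - u n)) =
      u (n + 1) / (n + 1).factorial / (n / (n + 1) * (1 - u n / n.factorial)) := by
  have hsucc : (n + 1 : 𝕜) ≠ 0 := n.cast_add_one_ne_zero
  have hfact : (n.factorial : 𝕜) ≠ 0 := Nat.cast_ne_zero.2 n.factorial_ne_zero
  rw [one_sub_div hfact, div_mul_div_comm, Nat.factorial_succ, Nat.cast_mul, Nat.cast_succ,
    div_div_div_cancel_right₀ (mul_ne_zero hsucc hfact)]

theorem tendsto_succ_div_mul_factorial_sub [TopologicalSpace 𝕜] [IsTopologicalDivisionRing 𝕜]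
    [ContinuousSMul ℚ≥0 𝕜] {u : ℕ → 𝕜} {L : 𝕜}
    (hu : Tendsto (fun n ↦ u n / n.factorial) atTop (𝓝 L)) (hL : L ≠ 1) :
    Tendsto (fun n ↦ u (n + 1) / (n * (n.factorial - u n))) atTop (𝓝 (L / (1 - L))) := by
  have hnum : Tendsto (fun n ↦ u (n + 1) / (n + 1).factorial) atTop (𝓝 L) :=
    hu.comp (tendsto_add_atTop_nat 1)
  have hden : Tendsto (fun n : ℕ ↦ n / (n + 1) * (1 - u n / n.factorial)) atTop
      (𝓝 (1 - L)) := by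
    simpa only [one_mul] using (tendsto_natCast_div_add_atTop (1 : 𝕜)).mul (hu.const_sub 1)
  simpa only [succ_div_mul_factorial_sub, Pi.div_def] using hnum.div hden (sub_ne_zero.2 hL.symm)

end RatioLimit

theorem stmt18 :
    Filter.Tendsto
      (fun n : ℕ => (d (n + 1) : ℝ) / (n * ((n.factorial : ℝ) - d n)))
      Filter.atTop (nhds (1 / (Real.exp 1 - 1))) := by
  have hlim : Tendsto (fun n ↦ (d n : ℝ) / n.factorial) atTop (𝓝 (Real.exp (-1))) := by
    simpa only [d_eq_numDerangements] using numDerangements_tendsto_inv_e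
  have hne : Real.exp (-1) ≠ 1 := (Real.exp_lt_one_iff.2 neg_one_lt_zero).ne
  simpa only [exp_neg_div_one_sub_exp_neg] using tendsto_succ_div_mul_factorial_sub hlim hne
end
end
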